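/- Let V be a real vector space and Z := V × Module.Dual ℝ V with the symmetric bilinear pairing B((x,p))((y,q)) := p(y) + q(x). Define the tangent-lift form Ḃ on Z × Z by Ḃ((z,ż))((w,ẇ)) := B(z)(ẇ) + B(ż)(w). Define τ : Z × Z → (V × V) × Module.Dual ℝ (V × V) by τ((x,p),(ẋ,ṗ)) := ((x,ẋ), L(ṗ,p)), where L(ṗ,p)(a,b) := ṗ(a) + p(b), and let B₂ be the symmetric pairing on (V × V) × Module.Dual ℝ (V × V) given by B₂((X,Ξ))((Y,Η)) := Ξ(Y) + Η(X). Then τ is a linear equivalence and B₂(τ(z))(τ(z')) = Ḃ(z)(z') for all z, z' ∈ Z × Z. -/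

import Mathlib

/-!
The pairing of a tangent vector `(p, ṗ)` to `M*` with a tangent vector `(x, ẋ)` to `M` is the
formal time derivative `ṗ x + p ẋ` of `p x`; this identifies `T(M*)` with `(TM)*`. The map `τ`
combines this identification with the interchange of the two middle factors. Hence both forms
evaluate to `ṗ y + p ẏ + q̇ x + q ẋ`, the derivative of the symmetric pairing `p y + q x` of
`(x, p)` with `(y, q)`; they only group the four terms differently.
-/

section Tulczyjew

variable {R M : Type*} [CommSemiring R] [AddCommMonoid M] [Module R M]

/-- The tangent lift of a bilinear form to `TM = M × M`, that is, its formal time derivative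
by the Leibniz rule; the second factor of `M × M` holds the velocities. -/
def tangentLift (B : LinearMap.BilinForm R M) : LinearMap.BilinForm R (M × M) :=
  B.compl₁₂ (LinearMap.fst R M M) (LinearMap.snd R M M) +
    B.compl₁₂ (LinearMap.snd R M M) (LinearMap.fst R M M)

theorem tangentLift_apply (B : LinearMap.BilinForm R M) (z w : M × M) :
    tangentLift B z w = B z.1 w.2 + B z.2 w.1 :=
  rfl

variable (R M)

/-- The canonical symmetric pairing on `M × M*`. It is `LinearMap.dualProd` with the factors
interchanged, so that positions precede momenta. -/
def splitPairing : LinearMap.BilinForm R (M × Module.Dual R M) :=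
  (LinearMap.dualProd R M).compl₁₂ (LinearEquiv.prodComm R M (Module.Dual R M)).toLinearMap
    (LinearEquiv.prodComm R M (Module.Dual R M)).toLinearMap

/-- The identification `T(M*) ≃ (TM)*`, under which `(p, ṗ)` acts on `(x, ẋ)` by the formal time
derivative of `p x`: thus `ṗ` is dual to positions and `p` is dual to velocities. -/
def tangentDualEquiv : (Module.Dual R M × Module.Dual R M) ≃ₗ[R] Module.Dual R (M × M) :=
  LinearEquiv.prodComm R _ _ ≪≫ₗ LinearMap.coprodEquiv R

/-- The Tulczyjew isomorphism `T(T*M) ≃ T*(TM)` in the flat case, where `T*M = M × M*`. -/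
def tulczyjewEquiv :
    ((M × Module.Dual R M) × (M × Module.Dual R M)) ≃ₗ[R] (M × M) × Module.Dual R (M × M) :=
  LinearEquiv.prodProdProdComm R M (Module.Dual R M) M (Module.Dual R M) ≪≫ₗ
    (LinearEquiv.refl R (M × M)).prodCongr (tangentDualEquiv R M)

variable {R M}

theorem splitPairing_apply (z w : M × Module.Dual R M) :
    splitPairing R M z w = z.2 w.1 + w.2 z.1 :=
  add_comm _ _

theorem tangentDualEquiv_apply (p : Module.Dual R M × Module.Dual R M) (x : M × M) :
    tangentDualEquiv R M p x = p.2 x.1 + p.1 x.2 :=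
  rfl

theorem tulczyjewEquiv_apply (z : (M × Module.Dual R M) × (M × Module.Dual R M)) :
    tulczyjewEquiv R M z = ((z.1.1, z.2.1), tangentDualEquiv R M (z.1.2, z.2.2)) :=
  rfl

theorem splitPairing_tulczyjewEquiv (z w : (M × Module.Dual R M) × (M × Module.Dual R M)) :
    splitPairing R (M × M) (tulczyjewEquiv R M z) (tulczyjewEquiv R M w) =
      tangentLift (splitPairing R M) z w := by
  simp only [splitPairing_apply, tangentLift_apply, tulczyjewEquiv_apply, tangentDualEquiv_apply]
  abel

variable (R M) in
theorem odd_tulczyjew_flat_general :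
    ∃ e : ((M × Module.Dual R M) × (M × Module.Dual R M)) ≃ₗ[R]
        (M × M) × Module.Dual R (M × M),
      (⇑e = fun z => ((z.1.1, z.2.1), z.2.2.coprod z.1.2)) ∧
        ∀ z w, splitPairing R (M × M) (e z) (e w) = tangentLift (splitPairing R M) z w :=
  ⟨tulczyjewEquiv R M, rfl, splitPairing_tulczyjewEquiv⟩

end Tulczyjew

/-- Flat ungraded model of the identification `ΠT*(TM) ≅ T(ΠT*M)`: the odd
symplectic structure of an anticotangent bundle is modeled by the split symmetric
pairing `B` between positions and antimomenta on `V × V*`, `Ḃ` is its tangent lift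
to `(V × V*) × (V × V*)` (which models `T(ΠT*V)`), and
`τ((x,p),(ẋ,ṗ)) = ((x,ẋ), L(ṗ,p))` is a linear equivalence carrying `Ḃ` to the
split symmetric pairing `B₂` on `(V × V) × (V × V)*`. -/
theorem odd_tulczyjew_flat (V : Type*) [AddCommGroup V] [Module ℝ V] :
    let B : (V × Module.Dual ℝ V) → (V × Module.Dual ℝ V) → ℝ := fun z w =>
      z.2 w.1 + w.2 z.1
    let Bdot : ((V × Module.Dual ℝ V) × (V × Module.Dual ℝ V)) →
        ((V × Module.Dual ℝ V) × (V × Module.Dual ℝ V)) → ℝ := fun z w =>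
      B z.1 w.2 + B z.2 w.1
    let L : Module.Dual ℝ V → Module.Dual ℝ V → Module.Dual ℝ (V × V) := fun pdot p =>
      pdot.comp (LinearMap.fst ℝ V V) + p.comp (LinearMap.snd ℝ V V)
    let τ : ((V × Module.Dual ℝ V) × (V × Module.Dual ℝ V)) →
        ((V × V) × Module.Dual ℝ (V × V)) := fun z =>
      ((z.1.1, z.2.1), L z.2.2 z.1.2)
    let B₂ : ((V × V) × Module.Dual ℝ (V × V)) →
        ((V × V) × Module.Dual ℝ (V × V)) → ℝ := fun X Y =>
      X.2 Y.1 + Y.2 X.1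
    (∃ e : ((V × Module.Dual ℝ V) × (V × Module.Dual ℝ V)) ≃ₗ[ℝ]
        ((V × V) × Module.Dual ℝ (V × V)), ⇑e = τ) ∧
      ∀ z z', B₂ (τ z) (τ z') = Bdot z z' := by
  obtain ⟨e, he, hB⟩ := odd_tulczyjew_flat_general ℝ V
  simp only [he, splitPairing_apply, tangentLift_apply] at hB
  exact ⟨⟨e, he⟩, hB⟩
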